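/- arXiv:1904.01747 — 2 statements merged into one kernel-verified Lean document; each statement's English description precedes it below -/
import Mathlib

section
/- Let l be a loss function that is c-admissible with respect to the linear hypothesis class, meaning |l(y, h(x)) − l(y, h'(x))| ≤ c|h(x) − h'(x)| for all linear hypotheses h, h' and examples (x,y). Then for each fixed (y_{ti}), the empirical Rademacher complexity of the loss class {(t,i) ↦ l(y_{ti}, ⟨a_t + a_0, Uᵀ x_{ti}⟩) : ‖A‖_{2,1}² ≤ T/γ, ‖a_0‖₂² ≤ 1/β, U orthogonal} over the sample {x_{ti}} is at most 2c(√(T/γ) + √(1/β)) √(∑_{t=1}^T m_t S(X_t)), where S(X_t) = (1/m_t)∑_{i=1}^{m_t} ‖x_{ti}‖₂². -/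
open Matrix

/-- The L2,1-norm of a matrix: the sum of the Euclidean norms of its rows. -/
noncomputable def l21 {d T : ℕ} (A : Matrix (Fin d) (Fin T) ℝ) : ℝ :=
  ∑ i, Real.sqrt (∑ t, A i t ^ 2)

/-- The real sign `±1` attached to a Boolean. -/
def rademacherSign (b : Bool) : ℝ := if b then 1 else -1

lemma abs_rademacherSign (b : Bool) : |rademacherSign b| = 1 := by
  cases b <;> simp [rademacherSign]

lemma rademacherSign_not (b : Bool) : rademacherSign (!b) = -rademacherSign b := by
  cases b <;> simp [rademacherSign]

lemma rademacherSign_mul_self (b : Bool) : rademacherSign b * rademacherSign b = 1 := by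
  cases b <;> simp [rademacherSign]

section Signs

variable {ι : Type*} [DecidableEq ι]

/-- The involution of sign patterns that flips the coordinate `k`. -/
def flipAt (k : ι) : Equiv.Perm (ι → Bool) :=
  Function.Involutive.toPerm (fun s => Function.update s k (!s k)) (by
    intro s
    simp)

@[simp] lemma flipAt_same (k : ι) (s : ι → Bool) : flipAt k s k = !s k := by
  simp [flipAt, Function.Involutive.toPerm]

lemma flipAt_of_ne {k i : ι} (h : i ≠ k) (s : ι → Bool) : flipAt k s i = s i := by
  simp [flipAt, Function.Involutive.toPerm, h]

variable [Fintype ι]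

lemma sum_le_sum_of_add_flipAt_le (k : ι) {F G : (ι → Bool) → ℝ}
    (h : ∀ s, F s + F (flipAt k s) ≤ G s + G (flipAt k s)) : ∑ s, F s ≤ ∑ s, G s := by
  have hsum := Finset.sum_le_sum fun s (_ : s ∈ Finset.univ) => h s
  rw [Finset.sum_add_distrib, Finset.sum_add_distrib, Equiv.sum_comp (flipAt k) F,
    Equiv.sum_comp (flipAt k) G] at hsum
  linarith

lemma sum_rademacherSign_mul (i j : ι) :
    ∑ s : ι → Bool, rademacherSign (s i) * rademacherSign (s j) =
      if i = j then 2 ^ Fintype.card ι else 0 := by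
  split_ifs with h
  · subst h
    simp [rademacherSign_mul_self]
  · have hflip := Equiv.sum_comp (flipAt i)
      (fun s : ι → Bool => rademacherSign (s i) * rademacherSign (s j))
    simp only [flipAt_same, flipAt_of_ne (Ne.symm h), rademacherSign_not, neg_mul,
      Finset.sum_neg_distrib] at hflip
    linarith

lemma sum_sq_rademacher (v : ι → ℝ) :
    ∑ s : ι → Bool, (∑ i, rademacherSign (s i) * v i) ^ 2 =
      2 ^ Fintype.card ι * ∑ i, v i ^ 2 := by
  have hexpand : ∀ s : ι → Bool, (∑ i, rademacherSign (s i) * v i) ^ 2 =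
      ∑ i, ∑ j, v i * v j * (rademacherSign (s i) * rademacherSign (s j)) := by
    intro s
    rw [sq, Finset.sum_mul_sum]
    exact Finset.sum_congr rfl fun i _ => Finset.sum_congr rfl fun j _ => by ring
  simp_rw [hexpand]
  rw [Finset.sum_comm, Finset.mul_sum]
  refine Finset.sum_congr rfl fun i _ => ?_
  rw [Finset.sum_comm]
  simp_rw [← Finset.mul_sum, sum_rademacherSign_mul]
  simp
  ring

/-- The expected Euclidean norm of a Rademacher sum of vectors. -/
lemma sum_sqrt_rademacher_le {κ : Type*} [Fintype κ] (v : ι → κ → ℝ) :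
    ∑ s : ι → Bool, √(∑ k, (∑ i, rademacherSign (s i) * v i k) ^ 2) ≤
      2 ^ Fintype.card ι * √(∑ i, ∑ k, v i k ^ 2) := by
  have hcs := sq_sum_le_card_mul_sum_sq (s := (Finset.univ : Finset (ι → Bool)))
    (f := fun s => √(∑ k, (∑ i, rademacherSign (s i) * v i k) ^ 2))
  have hsq : ∀ s : ι → Bool, √(∑ k, (∑ i, rademacherSign (s i) * v i k) ^ 2) ^ 2 =
      ∑ k, (∑ i, rademacherSign (s i) * v i k) ^ 2 :=
    fun s => Real.sq_sqrt (Finset.sum_nonneg fun _ _ => sq_nonneg _)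
  simp_rw [hsq] at hcs
  rw [Finset.sum_comm] at hcs
  simp_rw [sum_sq_rademacher] at hcs
  rw [← Finset.mul_sum, Finset.sum_comm] at hcs
  refine (sq_le_sq₀ (Finset.sum_nonneg fun _ _ => Real.sqrt_nonneg _) (by positivity)).mp ?_
  rw [mul_pow, Real.sq_sqrt (Finset.sum_nonneg fun _ _ => Finset.sum_nonneg fun _ _ => sq_nonneg _)]
  refine hcs.trans_eq ?_
  simp
  ring

end Signs

section Contraction

variable {H : Type*}

lemma ciSup_add_ciSup_sub_le [Nonempty H] {g a b : H → ℝ}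
    (hadd : BddAbove (Set.range fun h => g h + b h))
    (hsub : BddAbove (Set.range fun h => g h - b h))
    (hab : ∀ h h₂, |a h - a h₂| ≤ |b h - b h₂|) :
    (⨆ h, (g h + a h)) + (⨆ h, (g h - a h)) ≤ (⨆ h, (g h + b h)) + ⨆ h, (g h - b h) := by
  have key : ∀ h h₂, (g h + a h) + (g h₂ - a h₂) ≤
      (⨆ h, (g h + b h)) + ⨆ h, (g h - b h) := by
    intro h h₂
    have hle := (le_abs_self _).trans (hab h h₂)
    have h1 := le_ciSup hadd h
    have h2 := le_ciSup hsub h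
    have h3 := le_ciSup hadd h₂
    have h4 := le_ciSup hsub h₂
    rcases abs_cases (b h - b h₂) with ⟨he, _⟩ | ⟨he, _⟩ <;> linarith
  rw [← le_sub_iff_add_le]
  refine ciSup_le fun h => ?_
  rw [le_sub_comm]
  refine ciSup_le fun h₂ => ?_
  linarith [key h h₂]

variable {ι : Type*} [Fintype ι]

lemma bddAbove_range_rademacher {f : H → ι → ℝ} {B : ι → ℝ} (hf : ∀ h i, |f h i| ≤ B i)
    (s : ι → Bool) : BddAbove (Set.range fun h => ∑ i, rademacherSign (s i) * f h i) := by
  refine ⟨∑ i, B i, ?_⟩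
  rintro _ ⟨h, rfl⟩
  refine Finset.sum_le_sum fun i _ => (le_abs_self _).trans ?_
  rw [abs_mul, abs_rademacherSign, one_mul]
  exact hf h i

variable [Nonempty H] [DecidableEq ι]

/-- Replacing a single coordinate by one with larger increments increases the Rademacher
average. -/
lemma sum_ciSup_rademacher_le_of_coord {φ f : H → ι → ℝ} {B : ι → ℝ} (k : ι)
    (hf : ∀ h i, |f h i| ≤ B i) (hne : ∀ h i, i ≠ k → φ h i = f h i)
    (hφf : ∀ h h₂, |φ h k - φ h₂ k| ≤ |f h k - f h₂ k|) :
    ∑ s : ι → Bool, ⨆ h, ∑ i, rademacherSign (s i) * φ h i ≤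
      ∑ s : ι → Bool, ⨆ h, ∑ i, rademacherSign (s i) * f h i := by
  refine sum_le_sum_of_add_flipAt_le k fun s => ?_
  set g : H → ℝ := fun h => ∑ i ∈ Finset.univ.erase k, rademacherSign (s i) * f h i with hg
  have hsplit : ∀ ψ : H → ι → ℝ, (∀ h i, i ≠ k → ψ h i = f h i) → ∀ h,
      ∑ i, rademacherSign (s i) * ψ h i = g h + rademacherSign (s k) * ψ h k := by
    intro ψ hψ h
    rw [← Finset.sum_erase_add _ _ (Finset.mem_univ k)]
    congr 1
    exact Finset.sum_congr rfl fun i hi => by rw [hψ h i (Finset.ne_of_mem_erase hi)]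
  have hsplit_flip : ∀ ψ : H → ι → ℝ, (∀ h i, i ≠ k → ψ h i = f h i) → ∀ h,
      ∑ i, rademacherSign (flipAt k s i) * ψ h i = g h - rademacherSign (s k) * ψ h k := by
    intro ψ hψ h
    rw [← Finset.sum_erase_add _ _ (Finset.mem_univ k), flipAt_same, rademacherSign_not,
      neg_mul, ← sub_eq_add_neg]
    congr 1
    refine Finset.sum_congr rfl fun i hi => ?_
    rw [hψ h i (Finset.ne_of_mem_erase hi), flipAt_of_ne (Finset.ne_of_mem_erase hi)]
  have hadd := bddAbove_range_rademacher hf s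
  have hsub := bddAbove_range_rademacher hf (flipAt k s)
  simp only [hsplit f fun _ _ _ => rfl] at hadd
  simp only [hsplit_flip f fun _ _ _ => rfl] at hsub
  simp only [hsplit φ hne, hsplit_flip φ hne, hsplit f fun _ _ _ => rfl,
    hsplit_flip f fun _ _ _ => rfl]
  refine ciSup_add_ciSup_sub_le hadd hsub fun h h₂ => ?_
  rw [← mul_sub, ← mul_sub, abs_mul, abs_mul, abs_rademacherSign, one_mul, one_mul]
  exact hφf h h₂

/-- The contraction lemma for Rademacher averages. -/
lemma sum_ciSup_rademacher_le {φ f : H → ι → ℝ} {B : ι → ℝ}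
    (hφ : ∀ h i, |φ h i| ≤ B i) (hf : ∀ h i, |f h i| ≤ B i)
    (hφf : ∀ h h₂ i, |φ h i - φ h₂ i| ≤ |f h i - f h₂ i|) :
    ∑ s : ι → Bool, ⨆ h, ∑ i, rademacherSign (s i) * φ h i ≤
      ∑ s : ι → Bool, ⨆ h, ∑ i, rademacherSign (s i) * f h i := by
  have hybrid : ∀ S : Finset ι, ∑ s : ι → Bool, ⨆ h, ∑ i, rademacherSign (s i) * φ h i ≤
      ∑ s : ι → Bool, ⨆ h, ∑ i, rademacherSign (s i) * (if i ∈ S then f h i else φ h i) := by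
    intro S
    induction S using Finset.induction_on with
    | empty => simp
    | insert k S hk ih =>
      refine ih.trans (sum_ciSup_rademacher_le_of_coord (B := B) k ?_ ?_ ?_)
      · intro h i
        split_ifs
        exacts [hf h i, hφ h i]
      · intro h i hi
        simp [hi]
      · intro h h₂
        simpa [hk] using hφf h h₂ k
  simpa using hybrid Finset.univ

end Contraction

lemma sum_sq_le_l21_sq {d T : ℕ} (A : Matrix (Fin d) (Fin T) ℝ) :
    ∑ j, ∑ t, A j t ^ 2 ≤ l21 A ^ 2 := by
  have h := Finset.sum_sq_le_sq_sum_of_nonneg (s := Finset.univ)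
    (f := fun j => √(∑ t, A j t ^ 2)) fun _ _ => Real.sqrt_nonneg _
  simpa [l21, Real.sq_sqrt (Finset.sum_nonneg fun _ _ => sq_nonneg _)] using h

lemma sum_sq_transpose_mulVec {d : ℕ} {U : Matrix (Fin d) (Fin d) ℝ} (hU : Uᵀ * U = 1)
    (w : Fin d → ℝ) : ∑ j, (Uᵀ *ᵥ w) j ^ 2 = ∑ j, w j ^ 2 := by
  have hdot : (Uᵀ *ᵥ w) ⬝ᵥ (Uᵀ *ᵥ w) = w ⬝ᵥ w := by
    rw [Matrix.dotProduct_mulVec, Matrix.vecMul_transpose, Matrix.mulVec_mulVec,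
      mul_eq_one_comm.mp hU, Matrix.one_mulVec]
  simpa [dotProduct, sq] using hdot

lemma sum_mul_le_sqrt_mul_sqrt_of_le {κ : Type*} [Fintype κ] {f g : κ → ℝ} {R : ℝ}
    (hf : ∑ k, f k ^ 2 ≤ R) : ∑ k, f k * g k ≤ √R * √(∑ k, g k ^ 2) :=
  (Real.sum_mul_le_sqrt_mul_sqrt _ f g).trans
    (mul_le_mul_of_nonneg_right (Real.sqrt_le_sqrt hf) (Real.sqrt_nonneg _))

/-- A weighted sum of predictions is controlled by the norms of the weighted sums of the inputs,
taken task by task and over all tasks. -/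
lemma sum_weighted_prediction_le {d T : ℕ} {m : Fin T → ℕ}
    (x : (t : Fin T) → Fin (m t) → Fin d → ℝ) {R R₀ : ℝ} {A : Matrix (Fin d) (Fin T) ℝ}
    {a0 : Fin d → ℝ} {U : Matrix (Fin d) (Fin d) ℝ} (hA : l21 A ^ 2 ≤ R)
    (ha0 : ∑ j, a0 j ^ 2 ≤ R₀) (hU : Uᵀ * U = 1) (w : (Σ t, Fin (m t)) → ℝ) :
    ∑ p, w p * ((fun j => A j p.1 + a0 j) ⬝ᵥ Uᵀ *ᵥ x p.1 p.2) ≤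
      √R * √(∑ k : Fin T × Fin d, (∑ p, w p * if p.1 = k.1 then x p.1 p.2 k.2 else 0) ^ 2) +
        √R₀ * √(∑ j, (∑ p, w p * x p.1 p.2 j) ^ 2) := by
  have hsum : ∀ (z : (Σ t, Fin (m t)) → Fin d → ℝ),
      Uᵀ *ᵥ (fun j => ∑ p, w p * z p j) = fun j => ∑ p, w p * (Uᵀ *ᵥ z p) j := by
    intro z
    ext j
    simp only [Matrix.mulVec, dotProduct, Finset.mul_sum]
    rw [Finset.sum_comm]
    exact Finset.sum_congr rfl fun _ _ => Finset.sum_congr rfl fun _ _ => by ring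
  have htask : ∑ p, w p * ((fun j => A j p.1) ⬝ᵥ Uᵀ *ᵥ x p.1 p.2) =
      ∑ k : Fin T × Fin d, A k.2 k.1 *
        (Uᵀ *ᵥ fun j => ∑ p, w p * if p.1 = k.1 then x p.1 p.2 j else 0) k.2 := by
    have hite : ∀ (t : Fin T) (p : Σ t, Fin (m t)) (j : Fin d),
        (Uᵀ *ᵥ fun j => if p.1 = t then x p.1 p.2 j else 0) j =
          if p.1 = t then (Uᵀ *ᵥ x p.1 p.2) j else 0 := by
      intro t p j
      split_ifs
      · rfl
      · simp [Matrix.mulVec, dotProduct]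
    have hswap : ∀ F : Fin T → Fin d → (Σ t, Fin (m t)) → ℝ,
        ∑ t, ∑ j, ∑ p, F t j p = ∑ p, ∑ j, ∑ t, F t j p := by
      intro F
      rw [Finset.sum_comm, Finset.sum_comm (s := (Finset.univ : Finset (Σ t, Fin (m t))))]
      exact Finset.sum_congr rfl fun _ _ => Finset.sum_comm
    rw [Fintype.sum_prod_type]
    simp only [hsum, hite, Finset.mul_sum,
      dotProduct]
    rw [hswap]
    refine Finset.sum_congr rfl fun p _ => Finset.sum_congr rfl fun j _ => ?_
    simp only [mul_ite, mul_zero, Finset.sum_ite_eq, Finset.mem_univ, if_true]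
    ring
  have hcommon : ∑ p, w p * (a0 ⬝ᵥ Uᵀ *ᵥ x p.1 p.2) =
      ∑ j, a0 j * (Uᵀ *ᵥ fun j => ∑ p, w p * x p.1 p.2 j) j := by
    rw [hsum fun p => x p.1 p.2]
    simp only [dotProduct, Finset.mul_sum]
    rw [Finset.sum_comm]
    exact Finset.sum_congr rfl fun _ _ => Finset.sum_congr rfl fun _ _ => by ring
  have hadd : ∀ p : Σ t, Fin (m t), (fun j => A j p.1 + a0 j) ⬝ᵥ Uᵀ *ᵥ x p.1 p.2 =
      (fun j => A j p.1) ⬝ᵥ Uᵀ *ᵥ x p.1 p.2 + a0 ⬝ᵥ Uᵀ *ᵥ x p.1 p.2 :=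
    fun p => add_dotProduct (fun j => A j p.1) a0 _
  simp_rw [hadd, mul_add, Finset.sum_add_distrib]
  rw [htask, hcommon]
  refine add_le_add ?_ ?_
  · have hAR : ∑ k : Fin T × Fin d, A k.2 k.1 ^ 2 ≤ R := by
      rw [Fintype.sum_prod_type_right]
      exact (sum_sq_le_l21_sq A).trans hA
    refine (sum_mul_le_sqrt_mul_sqrt_of_le hAR).trans_eq ?_
    simp only [Fintype.sum_prod_type]
    rw [Finset.sum_congr rfl fun t _ => sum_sq_transpose_mulVec hU
      fun j => ∑ p, w p * if p.1 = t then x p.1 p.2 j else 0]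
  · refine (sum_mul_le_sqrt_mul_sqrt_of_le ha0).trans_eq ?_
    rw [sum_sq_transpose_mulVec hU]

/-- if the loss l is c-admissible (Lipschitz in its second argument with
constant c, with l(y,0) = 0), then the (unnormalized) empirical Rademacher complexity of
the constrained loss class is at most 2c(√(T/γ) + √(1/β))√(∑ₜ mₜ S(Xₜ)), where
S(Xₜ) = (1/mₜ)∑ᵢ ‖x_{ti}‖₂². The Rademacher expectation is the average over all signs. -/
theorem loss_class_rademacher_bound {d T : ℕ} (γ β c : ℝ) (hγ : 0 < γ) (hβ : 0 < β)
    (hc : 0 ≤ c) (l : ℝ → ℝ → ℝ)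
    (hadm : ∀ y s s' : ℝ, |l y s - l y s'| ≤ c * |s - s'|)
    (hl0 : ∀ y : ℝ, l y 0 = 0)
    (m : Fin T → ℕ) (x : (t : Fin T) → Fin (m t) → Fin d → ℝ)
    (y : (t : Fin T) → Fin (m t) → ℝ) :
    2 * (∑ s : (t : Fin T) → Fin (m t) → Bool,
        sSup {v : ℝ |
          ∃ (A : Matrix (Fin d) (Fin T) ℝ) (a0 : Fin d → ℝ) (U : Matrix (Fin d) (Fin d) ℝ),
            l21 A ^ 2 ≤ (T : ℝ) / γ ∧ (∑ j, a0 j ^ 2) ≤ 1 / β ∧ Uᵀ * U = 1 ∧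
            v = ∑ t, ∑ i, (if s t i then (1 : ℝ) else -1) *
              l (y t i) ((fun j => A j t + a0 j) ⬝ᵥ Uᵀ.mulVec (x t i))}) / 2 ^ (∑ t, m t) ≤
      2 * c * (Real.sqrt ((T : ℝ) / γ) + Real.sqrt (1 / β)) *
        Real.sqrt (∑ t, (m t : ℝ) * ((∑ i, ∑ j, x t i j ^ 2) / (m t : ℝ))) := by
  set R : ℝ := (T : ℝ) / γ with hR
  set R₀ : ℝ := 1 / β with hR₀
  have hR_nonneg : 0 ≤ R := by positivity
  have hR₀_nonneg : 0 ≤ R₀ := by positivity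
  let H := {h : Matrix (Fin d) (Fin T) ℝ × (Fin d → ℝ) × Matrix (Fin d) (Fin d) ℝ //
    l21 h.1 ^ 2 ≤ R ∧ ∑ j, h.2.1 j ^ 2 ≤ R₀ ∧ h.2.2ᵀ * h.2.2 = 1}
  have : Nonempty H := ⟨⟨(0, 0, 1), by simpa [l21] using hR_nonneg, by simpa using hR₀_nonneg,
    by simp⟩⟩
  let f : H → (Σ t, Fin (m t)) → ℝ := fun h p =>
    (fun j => h.1.1 j p.1 + h.1.2.1 j) ⬝ᵥ h.1.2.2ᵀ *ᵥ x p.1 p.2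
  let N : ((Σ t, Fin (m t)) → ℝ) → ℝ := fun w =>
    √R * √(∑ k : Fin T × Fin d, (∑ p, w p * if p.1 = k.1 then x p.1 p.2 k.2 else 0) ^ 2) +
      √R₀ * √(∑ j, (∑ p, w p * x p.1 p.2 j) ^ 2)
  have hfN : ∀ (h : H) w, ∑ p, w p * f h p ≤ N w :=
    fun h w => sum_weighted_prediction_le x h.2.1 h.2.2.1 h.2.2.2 w
  have hf_bound : ∀ h p, |f h p| ≤ max (N (Pi.single p 1)) (N (Pi.single p (-1))) := by
    intro h p
    refine max_le_max ?_ ?_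
    · simpa [Pi.single_apply] using hfN h (Pi.single p 1)
    · simpa [Pi.single_apply] using hfN h (Pi.single p (-1))
  have hcontract := sum_ciSup_rademacher_le (H := H)
    (φ := fun h p => l (y p.1 p.2) (f h p)) (f := fun h p => c * f h p)
    (B := fun p => c * max (N (Pi.single p 1)) (N (Pi.single p (-1))))
    (fun h p => by
      have hl := hadm (y p.1 p.2) (f h p) 0
      rw [hl0, sub_zero, sub_zero] at hl
      exact hl.trans (mul_le_mul_of_nonneg_left (hf_bound h p) hc))
    (fun h p => by
      rw [abs_mul, abs_of_nonneg hc]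
      exact mul_le_mul_of_nonneg_left (hf_bound h p) hc)
    (fun h h₂ p => by
      rw [← mul_sub, abs_mul, abs_of_nonneg hc]
      exact hadm _ _ _)
  have hsup : ∀ s : (Σ t, Fin (m t)) → Bool,
      ⨆ h, ∑ p, rademacherSign (s p) * (c * f h p) ≤ c * N fun p => rademacherSign (s p) := by
    intro s
    refine ciSup_le fun h => ?_
    refine le_trans (le_of_eq ?_) (mul_le_mul_of_nonneg_left (hfN h _) hc)
    rw [Finset.mul_sum]
    exact Finset.sum_congr rfl fun p _ => by ring
  have hcard : Fintype.card (Σ t, Fin (m t)) = ∑ t, m t := by simp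
  have hnorm : ∑ p : Σ t, Fin (m t), ∑ k : Fin T × Fin d,
      (if p.1 = k.1 then x p.1 p.2 k.2 else 0) ^ 2 =
        ∑ p : Σ t, Fin (m t), ∑ j, x p.1 p.2 j ^ 2 := by
    refine Finset.sum_congr rfl fun p _ => ?_
    rw [Fintype.sum_prod_type_right]
    simp [ite_pow]
  have hN : ∑ s : (Σ t, Fin (m t)) → Bool, N (fun p => rademacherSign (s p)) ≤
      2 ^ (∑ t, m t) * ((√R + √R₀) * √(∑ p : Σ t, Fin (m t), ∑ j, x p.1 p.2 j ^ 2)) := by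
    have hA := sum_sqrt_rademacher_le fun (p : Σ t, Fin (m t)) (k : Fin T × Fin d) =>
      if p.1 = k.1 then x p.1 p.2 k.2 else 0
    have ha0 := sum_sqrt_rademacher_le fun (p : Σ t, Fin (m t)) (j : Fin d) => x p.1 p.2 j
    rw [hnorm, hcard] at hA
    rw [hcard] at ha0
    simp only [N]
    rw [Finset.sum_add_distrib, ← Finset.mul_sum, ← Finset.mul_sum]
    linarith [mul_le_mul_of_nonneg_left hA (Real.sqrt_nonneg R),
      mul_le_mul_of_nonneg_left ha0 (Real.sqrt_nonneg R₀)]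
  have hdata : ∑ t, (m t : ℝ) * ((∑ i, ∑ j, x t i j ^ 2) / (m t : ℝ)) =
      ∑ p : Σ t, Fin (m t), ∑ j, x p.1 p.2 j ^ 2 := by
    rw [Fintype.sum_sigma]
    refine Finset.sum_congr rfl fun t _ => ?_
    rcases Nat.eq_zero_or_pos (m t) with h | h
    · have : IsEmpty (Fin (m t)) := by rw [h]; infer_instance
      simp
    · exact mul_div_cancel₀ _ (by positivity)
  have hset : ∀ s : (t : Fin T) → Fin (m t) → Bool,
      sSup {v : ℝ |
          ∃ (A : Matrix (Fin d) (Fin T) ℝ) (a0 : Fin d → ℝ) (U : Matrix (Fin d) (Fin d) ℝ),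
            l21 A ^ 2 ≤ R ∧ (∑ j, a0 j ^ 2) ≤ R₀ ∧ Uᵀ * U = 1 ∧
            v = ∑ t, ∑ i, (if s t i then (1 : ℝ) else -1) *
              l (y t i) ((fun j => A j t + a0 j) ⬝ᵥ Uᵀ.mulVec (x t i))} =
        ⨆ h : H, ∑ p, rademacherSign (s p.1 p.2) * l (y p.1 p.2) (f h p) := by
    intro s
    rw [iSup]
    congr 1
    ext v
    simp only [Set.mem_ofPred_eq, Set.mem_range, Fintype.sum_sigma, rademacherSign]
    constructor
    · rintro ⟨A, a0, U, hA, ha0, hU, rfl⟩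
      exact ⟨⟨(A, a0, U), hA, ha0, hU⟩, rfl⟩
    · rintro ⟨⟨⟨A, a0, U⟩, hA, ha0, hU⟩, rfl⟩
      exact ⟨A, a0, U, hA, ha0, hU, rfl⟩
  have hreindex : ∑ s : (t : Fin T) → Fin (m t) → Bool,
      ⨆ h : H, ∑ p, rademacherSign (s p.1 p.2) * l (y p.1 p.2) (f h p) =
        ∑ s : (Σ t, Fin (m t)) → Bool,
          ⨆ h : H, ∑ p, rademacherSign (s p) * l (y p.1 p.2) (f h p) :=
    (Equiv.sum_comp (Equiv.piCurry fun (t : Fin T) (_ : Fin (m t)) => Bool) _).symm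
  simp_rw [hset]
  rw [hreindex, hdata, div_le_iff₀ (by positivity)]
  have htotal := hcontract.trans (Finset.sum_le_sum fun s _ => hsup s)
  rw [← Finset.mul_sum] at htotal
  linarith [mul_le_mul_of_nonneg_left hN hc]
end

section
/- Multi-task generalization bound: Under the constraints ‖A‖_{2,1}² ≤ T/γ and ‖a_0‖₂² ≤ 1/β with U orthogonal, if the loss l is c-admissible and bounded by B, m_1 = ... = m_T = m, and ‖x_t‖₂ ≤ r for all samples, then for any δ > 0, with probability at least 1 − δ over the i.i.d. draw of the samples, (1/T)∑_{t=1}^T E_x l(y_t, ⟨a_t + a_0, Uᵀ x_t⟩) − (1/T)∑_{t=1}^T (1/m)∑_{i=1}^m l(y_{ti}, ⟨a_t + a_0, Uᵀ x_{ti}⟩) ≤ 2cr/√(γm) + 2cr/√(βmT) + 3B√(ln(2/δ)/(2mT)), uniformly over all (A, a_0, U) satisfying the constraints. -/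
open Matrix MeasureTheory

theorem abs_integral_le_of_forall_abs_le {Z : Type*} [MeasurableSpace Z] (ν : Measure Z)
    [IsProbabilityMeasure ν] {f : Z → ℝ} {C : ℝ} (hf : ∀ z, |f z| ≤ C) : |∫ z, f z ∂ν| ≤ C := by
  simpa using norm_integral_le_of_norm_le_const (μ := ν) (f := f) (ae_of_all _ hf)

section FiniteSup

variable {Θ : Type*} [Finite Θ] [Nonempty Θ]

theorem abs_ciSup_le_of_forall_abs_le {f : Θ → ℝ} {C : ℝ} (hf : ∀ θ, |f θ| ≤ C) :
    |⨆ θ, f θ| ≤ C := by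
  obtain ⟨θ, hθ⟩ := exists_eq_ciSup_of_finite (f := f)
  rw [← hθ]
  exact hf θ

theorem abs_ciSup_sub_ciSup_le {f g : Θ → ℝ} {C : ℝ} (hfg : ∀ θ, |f θ - g θ| ≤ C) :
    |(⨆ θ, f θ) - ⨆ θ, g θ| ≤ C := by
  have key : ∀ {f g : Θ → ℝ}, (∀ θ, |f θ - g θ| ≤ C) → (⨆ θ, f θ) - ⨆ θ, g θ ≤ C := by
    intro f g hfg
    obtain ⟨θ, hθ⟩ := exists_eq_ciSup_of_finite (f := f)
    have h1 := le_ciSup (Set.finite_range g).bddAbove θ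
    have h2 := (abs_le.1 (hfg θ)).2
    linarith
  rw [abs_le']
  refine ⟨key hfg, ?_⟩
  rw [neg_sub]
  exact key fun θ => by rw [abs_sub_comm]; exact hfg θ

/-- Contraction principle for a single Rademacher sign. -/
theorem ciSup_add_add_ciSup_sub_le (F : Θ → ℝ) {h g : Θ → ℝ}
    (hg : ∀ θ θ', |h θ - h θ'| ≤ |g θ - g θ'|) :
    (⨆ θ, (F θ + h θ)) + ⨆ θ, (F θ - h θ) ≤ (⨆ θ, (F θ + g θ)) + ⨆ θ, (F θ - g θ) := by
  obtain ⟨p, hp⟩ := exists_eq_ciSup_of_finite (f := fun θ => F θ + h θ)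
  obtain ⟨q, hq⟩ := exists_eq_ciSup_of_finite (f := fun θ => F θ - h θ)
  rw [← hp, ← hq]
  have plus := le_ciSup (Set.finite_range fun θ => F θ + g θ).bddAbove
  have minus := le_ciSup (Set.finite_range fun θ => F θ - g θ).bddAbove
  have hpq := (le_abs_self _).trans (hg p q)
  have := plus p
  have := plus q
  have := minus p
  have := minus q
  rcases abs_cases (g p - g q) with h | h <;> linarith

variable {Z : Type*} [MeasurableSpace Z]

theorem integrable_ciSup_of_bound (P : Measure Z) [IsFiniteMeasure P] {q : Θ → Z → ℝ}
    (hq : ∀ θ, Measurable (q θ)) {C : ℝ} (hC : ∀ θ z, |q θ z| ≤ C) :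
    Integrable (fun z => ⨆ θ, q θ z) P :=
  Integrable.of_bound (Measurable.iSup hq).aestronglyMeasurable C
    (ae_of_all _ fun z => abs_ciSup_le_of_forall_abs_le fun θ => hC θ z)

/-- One-coordinate symmetrization. -/
theorem integral_ciSup_deviation_le (ν : Measure Z) [IsProbabilityMeasure ν] (F : Θ → ℝ)
    {h : Θ → Z → ℝ} {B : ℝ} (hm : ∀ θ, Measurable (h θ)) (hb : ∀ θ z, |h θ z| ≤ B) :
    ∫ z, ⨆ θ, (F θ + (∫ x, h θ x ∂ν - h θ z)) ∂ν ≤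
      ∫ z, ((⨆ θ, (F θ + 2 * h θ z)) + ⨆ θ, (F θ - 2 * h θ z)) / 2 ∂ν := by
  have hint : ∀ θ, Integrable (h θ) ν := fun θ =>
    Integrable.of_bound (hm θ).aestronglyMeasurable B (ae_of_all _ (hb θ))
  obtain ⟨C, hC⟩ : ∃ C, ∀ θ, |F θ| ≤ C :=
    ⟨_, le_ciSup (Set.finite_range fun θ => |F θ|).bddAbove⟩
  have intSup : ∀ {k : Θ → Z → ℝ}, (∀ θ, Measurable (k θ)) → (∀ θ z, |k θ z| ≤ 2 * B) →
      Integrable (fun z => ⨆ θ, (F θ + k θ z)) ν := fun hk hkb =>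
    integrable_ciSup_of_bound ν (fun θ => (hk θ).const_add _) fun θ z =>
      (abs_add_le _ _).trans (add_le_add (hC θ) (hkb θ z))
  have hplus : Integrable (fun z => ⨆ θ, (F θ + 2 * h θ z)) ν :=
    intSup (fun θ => (hm θ).const_mul 2) fun θ z => by
      rw [abs_mul, abs_two]; linarith [hb θ z]
  have hminus : Integrable (fun z => ⨆ θ, (F θ - 2 * h θ z)) ν :=
    intSup (k := fun θ z => -(2 * h θ z)) (fun θ => ((hm θ).const_mul 2).neg) fun θ z => by
      rw [abs_neg, abs_mul, abs_two]; linarith [hb θ z]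
  have hmean : ∀ θ, |∫ x, h θ x ∂ν| ≤ B := fun θ =>
    abs_integral_le_of_forall_abs_le ν (hb θ)
  have hdev : Integrable (fun z => ⨆ θ, (F θ + (∫ x, h θ x ∂ν - h θ z))) ν :=
    intSup (fun θ => (hm θ).const_sub _) fun θ z =>
      (abs_sub _ _).trans (by linarith [hb θ z, hmean θ])
  have pointwise : ∀ z, ⨆ θ, (F θ + (∫ x, h θ x ∂ν - h θ z)) ≤
      ((∫ x, ⨆ θ, (F θ + 2 * h θ x) ∂ν) + ⨆ θ, (F θ - 2 * h θ z)) / 2 := by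
    intro z
    refine ciSup_le fun θ => ?_
    have h1 : F θ + 2 * ∫ x, h θ x ∂ν ≤ ∫ x, ⨆ θ, (F θ + 2 * h θ x) ∂ν := by
      have : F θ + 2 * ∫ x, h θ x ∂ν = ∫ x, (F θ + 2 * h θ x) ∂ν := by
        rw [integral_add (integrable_const _) ((hint θ).const_mul 2), integral_const_mul]
        simp
      rw [this]
      exact integral_mono ((integrable_const _).add ((hint θ).const_mul 2)) hplus fun x =>
        le_ciSup (Set.finite_range fun θ => F θ + 2 * h θ x).bddAbove θ
    have h2 := le_ciSup (Set.finite_range fun θ => F θ - 2 * h θ z).bddAbove θ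
    linarith
  refine (integral_mono hdev (((integrable_const _).add hminus).div_const 2) pointwise).trans_eq ?_
  rw [integral_div, integral_div, integral_add hplus hminus,
    integral_add' (integrable_const _) hminus]
  simp

end FiniteSup

section ProductMeasure

variable {Z : Type*} [MeasurableSpace Z]

theorem measurePreserving_fin_cons {n : ℕ} (ν : Fin (n + 1) → Measure Z) [∀ i, SigmaFinite (ν i)] :
    MeasurePreserving (fun p : Z × (Fin n → Z) => (Fin.cons p.1 p.2 : Fin (n + 1) → Z))
      ((ν 0).prod (Measure.pi fun j => ν j.succ)) (Measure.pi ν) := by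
  have h := (measurePreserving_piFinSuccAbove ν 0).symm
  simpa [MeasurableEquiv.piFinSuccAbove_symm_apply, Fin.insertNthEquiv] using h

theorem integral_pi_fin_succ {n : ℕ} (ν : Fin (n + 1) → Measure Z) [∀ i, SigmaFinite (ν i)]
    {f : (Fin (n + 1) → Z) → ℝ} (hf : Measurable f) :
    ∫ ω, f ω ∂Measure.pi ν =
      ∫ p, f (Fin.cons p.1 p.2) ∂(ν 0).prod (Measure.pi fun j => ν j.succ) := by
  have h := measurePreserving_fin_cons ν
  rw [← h.map_eq, integral_map h.measurable.aemeasurable hf.aestronglyMeasurable]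

theorem measurePreserving_uncurry_finProdFinEquiv {T m : ℕ} (μ : Fin T → Measure Z)
    [∀ t, IsProbabilityMeasure (μ t)] :
    MeasurePreserving
      (fun (ω : Fin T → Fin m → Z) k => ω (finProdFinEquiv.symm k).1 (finProdFinEquiv.symm k).2)
      (Measure.pi fun t => Measure.pi fun _ : Fin m => μ t)
      (Measure.pi fun k : Fin (T * m) => μ (finProdFinEquiv.symm k).1) := by
  refine ⟨by fun_prop, (Measure.pi_eq fun s hs => ?_).symm⟩
  rw [Measure.map_apply (by fun_prop) (MeasurableSet.univ_pi hs)]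
  have : (fun (ω : Fin T → Fin m → Z) k =>
      ω (finProdFinEquiv.symm k).1 (finProdFinEquiv.symm k).2) ⁻¹' Set.univ.pi s =
      Set.univ.pi fun t => Set.univ.pi fun i => s (finProdFinEquiv (t, i)) := by
    ext ω
    simp only [Set.mem_preimage, Set.mem_univ_pi]
    constructor
    · intro h t i
      simpa using h (finProdFinEquiv (t, i))
    · intro h k
      have := h (finProdFinEquiv.symm k).1 (finProdFinEquiv.symm k).2
      rwa [Prod.mk.eta, Equiv.apply_symm_apply] at this
  rw [this, Measure.pi_pi]
  simp_rw [Measure.pi_pi]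
  rw [← Fintype.prod_prod_type', ← finProdFinEquiv.prod_comp]
  simp

/-- Moment generating function form of McDiarmid's bounded differences inequality. -/
theorem integral_exp_le_of_bounded_differences {n : ℕ} (ν : Fin n → Measure Z)
    [∀ i, IsProbabilityMeasure (ν i)] {f : (Fin n → Z) → ℝ} (hf : Measurable f) {M : ℝ}
    (hM : ∀ ω, |f ω| ≤ M) {C : Fin n → ℝ}
    (hC : ∀ ω i z, |f (Function.update ω i z) - f ω| ≤ C i) (s : ℝ) :
    ∫ ω, Real.exp (s * f ω) ∂Measure.pi ν ≤
      Real.exp (s * ∫ ω, f ω ∂Measure.pi ν + s ^ 2 * (∑ i, C i ^ 2) / 8) := by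
  induction n with
  | zero =>
    have hconst : ∀ ω, f ω = f default := fun ω => congrArg f (Subsingleton.elim _ _)
    simp_rw [hconst]
    simp
  | succ n ih =>
    have hcons : Measurable fun p : Z × (Fin n → Z) => f (Fin.cons p.1 p.2) :=
      hf.comp (measurePreserving_fin_cons ν).measurable
    have hsec : ∀ z, Measurable fun ω : Fin n → Z => f (Fin.cons z ω) := fun z =>
      hcons.comp measurable_prodMk_left
    have hexp : ∀ ω, ‖Real.exp (s * f ω)‖ ≤ Real.exp (|s| * M) := fun ω => by
      rw [Real.norm_eq_abs, Real.abs_exp, Real.exp_le_exp]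
      refine (le_abs_self _).trans ?_
      rw [abs_mul]
      exact mul_le_mul_of_nonneg_left (hM ω) (abs_nonneg s)
    set P := Measure.pi fun j : Fin n => ν j.succ
    have hfint : Integrable (fun p : Z × (Fin n → Z) => f (Fin.cons p.1 p.2)) ((ν 0).prod P) :=
      Integrable.of_bound hcons.aestronglyMeasurable M (ae_of_all _ fun p => hM _)
    have heint : Integrable (fun p : Z × (Fin n → Z) => Real.exp (s * f (Fin.cons p.1 p.2)))
        ((ν 0).prod P) :=
      Integrable.of_bound (hcons.const_mul s).exp.aestronglyMeasurable _
        (ae_of_all _ fun p => hexp _)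
    have hsint : ∀ z, Integrable (fun ω => f (Fin.cons z ω)) P := fun z =>
      Integrable.of_bound (hsec z).aestronglyMeasurable M (ae_of_all _ fun p => hM _)
    set g : Z → ℝ := fun z => ∫ ω, f (Fin.cons z ω) ∂P with hg
    have hgm : Measurable g := hcons.stronglyMeasurable.integral_prod_right'.measurable
    have hgM : ∀ z, |g z| ≤ M := fun z =>
      abs_integral_le_of_forall_abs_le P fun ω => hM (Fin.cons z ω)
    have hgC : ∀ z z', |g z - g z'| ≤ C 0 := fun z z' => by
      rw [hg]
      simp only
      rw [← integral_sub (hsint z) (hsint z')]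
      refine abs_integral_le_of_forall_abs_le P fun ω => ?_
      have := hC (Fin.cons z' ω) 0 z
      rwa [Fin.update_cons_zero] at this
    have hsection : ∀ z, ∫ ω, Real.exp (s * f (Fin.cons z ω)) ∂P ≤
        Real.exp (s * g z + s ^ 2 * (∑ i : Fin n, C i.succ ^ 2) / 8) := fun z =>
      ih (fun j => ν j.succ) (hsec z) (fun ω => hM _) fun ω i x => by
        rw [Fin.cons_update]
        exact hC _ _ _
    have : Nonempty Z := nonempty_of_isProbabilityMeasure (ν 0)
    have hrange : ∀ z, g z ∈ Set.Icc (⨅ x, g x) ((⨅ x, g x) + C 0) := fun z => by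
      have hbdd : BddBelow (Set.range g) := ⟨-M, by rintro _ ⟨x, rfl⟩; exact (abs_le.1 (hgM x)).1⟩
      refine ⟨ciInf_le hbdd z, ?_⟩
      have : g z - C 0 ≤ ⨅ x, g x := le_ciInf fun x => by linarith [(abs_le.1 (hgC z x)).2]
      linarith
    have hoeffding := (ProbabilityTheory.hasSubgaussianMGF_of_mem_Icc (μ := ν 0)
      hgm.aemeasurable (ae_of_all _ hrange)).mgf_le s
    have hmean : ∫ z, g z ∂ν 0 = ∫ ω, f ω ∂Measure.pi ν := by
      rw [integral_pi_fin_succ ν hf, integral_prod _ hfint]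
    have hgexp : ∫ z, Real.exp (s * g z) ∂ν 0 ≤
        Real.exp (s * ∫ z, g z ∂ν 0 + s ^ 2 * C 0 ^ 2 / 8) := by
      have e1 : ∀ z, Real.exp (s * g z) =
          Real.exp (s * ∫ z, g z ∂ν 0) * Real.exp (s * (g z - ∫ z, g z ∂ν 0)) := fun z => by
        rw [← Real.exp_add]; ring_nf
      simp_rw [e1]
      rw [integral_const_mul, Real.exp_add]
      refine mul_le_mul_of_nonneg_left (hoeffding.trans_eq ?_) (Real.exp_nonneg _)
      congr 1
      simp only [add_sub_cancel_left, NNReal.coe_pow, NNReal.coe_div, coe_nnnorm,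
        Real.norm_eq_abs, NNReal.coe_ofNat, div_pow, sq_abs]
      ring
    rw [integral_pi_fin_succ ν (hf.const_mul s).exp, integral_prod _ heint]
    calc ∫ z, ∫ ω, Real.exp (s * f (Fin.cons z ω)) ∂P ∂ν 0
        ≤ ∫ z, Real.exp (s * g z + s ^ 2 * (∑ i : Fin n, C i.succ ^ 2) / 8) ∂ν 0 := by
          refine integral_mono heint.integral_prod_left ?_ hsection
          simp_rw [Real.exp_add]
          refine (Integrable.of_bound (hgm.const_mul s).exp.aestronglyMeasurable
            (Real.exp (|s| * M)) (ae_of_all _ fun z => ?_)).mul_const _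
          rw [Real.norm_eq_abs, Real.abs_exp, Real.exp_le_exp]
          refine (le_abs_self _).trans ?_
          rw [abs_mul]
          exact mul_le_mul_of_nonneg_left (hgM z) (abs_nonneg s)
      _ = (∫ z, Real.exp (s * g z) ∂ν 0) *
            Real.exp (s ^ 2 * (∑ i : Fin n, C i.succ ^ 2) / 8) := by
          simp_rw [Real.exp_add]
          rw [integral_mul_const]
      _ ≤ Real.exp (s * ∫ z, g z ∂ν 0 + s ^ 2 * C 0 ^ 2 / 8) *
            Real.exp (s ^ 2 * (∑ i : Fin n, C i.succ ^ 2) / 8) :=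
          mul_le_mul_of_nonneg_right hgexp (Real.exp_nonneg _)
      _ = _ := by
          rw [← Real.exp_add, hmean, Fin.sum_univ_succ]
          ring_nf

/-- **McDiarmid's inequality** for bounded measurable functions of independent variables. -/
theorem measure_ge_le_of_bounded_differences {n : ℕ} (ν : Fin n → Measure Z)
    [∀ i, IsProbabilityMeasure (ν i)] {f : (Fin n → Z) → ℝ} (hf : Measurable f) {M : ℝ}
    (hM : ∀ ω, |f ω| ≤ M) {C : Fin n → ℝ}
    (hC : ∀ ω i z, |f (Function.update ω i z) - f ω| ≤ C i) {ε : ℝ} (hε : 0 ≤ ε) :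
    (Measure.pi ν).real {ω | ∫ ω, f ω ∂Measure.pi ν + ε ≤ f ω} ≤
      Real.exp (-2 * ε ^ 2 / ∑ i, C i ^ 2) := by
  have key : ProbabilityTheory.HasSubgaussianMGF (fun ω => f ω - ∫ ω, f ω ∂Measure.pi ν)
      (Real.toNNReal ((∑ i, C i ^ 2) / 4)) (Measure.pi ν) := by
    refine ⟨fun s => ?_, fun s => ?_⟩
    · exact ProbabilityTheory.integrable_exp_mul_of_mem_Icc (a := -M - ∫ ω, f ω ∂Measure.pi ν)
        (b := M - ∫ ω, f ω ∂Measure.pi ν) (hf.sub_const _).aemeasurable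
        (ae_of_all _ fun ω => ⟨by linarith [(abs_le.1 (hM ω)).1],
          by linarith [(abs_le.1 (hM ω)).2]⟩)
    · have e1 : ∀ ω, Real.exp (s * (f ω - ∫ ω, f ω ∂Measure.pi ν)) =
          Real.exp (s * f ω) * Real.exp (-(s * ∫ ω, f ω ∂Measure.pi ν)) := fun ω => by
        rw [← Real.exp_add]; ring_nf
      rw [ProbabilityTheory.mgf]
      simp_rw [e1]
      rw [integral_mul_const]
      refine (mul_le_mul_of_nonneg_right (integral_exp_le_of_bounded_differences ν hf hM hC s)
        (Real.exp_nonneg _)).trans_eq ?_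
      rw [← Real.exp_add, Real.coe_toNNReal _ (by positivity)]
      ring_nf
  have h := key.measure_ge_le hε
  rw [Real.coe_toNNReal _ (by positivity)] at h
  convert h using 2
  · ext ω
    simp only [Set.mem_ofPred_eq]
    constructor <;> intro <;> linarith
  · by_cases h0 : ∑ i, C i ^ 2 = 0
    · simp [h0]
    · field_simp
      ring_nf

end ProductMeasure

section EmpiricalProcess

variable {Θ Z H K : Type*} [Finite Θ] [Nonempty Θ] [MeasurableSpace Z]
  [NormedAddCommGroup H] [InnerProductSpace ℝ H] [NormedAddCommGroup K] [InnerProductSpace ℝ K]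

theorem sqrt_add_sqrt_norm_sq_le (u : H) {x : H} {r k : ℝ} (hk : 0 ≤ k) (hx : ‖x‖ ≤ r) :
    √(‖u + x‖ ^ 2 + k) + √(‖u - x‖ ^ 2 + k) ≤ 2 * √(‖u‖ ^ 2 + (k + r ^ 2)) := by
  have hpar := parallelogram_law_with_norm ℝ u x
  have hxr : ‖x‖ ^ 2 ≤ r ^ 2 := pow_le_pow_left₀ (norm_nonneg x) hx 2
  have h1 := Real.sq_sqrt (show 0 ≤ ‖u + x‖ ^ 2 + k by positivity)
  have h2 := Real.sq_sqrt (show 0 ≤ ‖u - x‖ ^ 2 + k by positivity)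
  have h3 := Real.sq_sqrt (show 0 ≤ ‖u‖ ^ 2 + (k + r ^ 2) by positivity)
  refine le_of_sq_le_sq ?_ (by positivity)
  nlinarith [sq_nonneg (√(‖u + x‖ ^ 2 + k) - √(‖u - x‖ ^ 2 + k))]

theorem abs_sum_deviation_le {n : ℕ} (ν : Fin n → Measure Z) [∀ i, IsProbabilityMeasure (ν i)]
    {h : Fin n → Z → ℝ} {B : ℝ} (hb : ∀ i z, |h i z| ≤ B) (ω : Fin n → Z) :
    |∑ i, (∫ x, h i x ∂ν i - h i (ω i))| ≤ n * (2 * B) := by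
  refine (Finset.abs_sum_le_sum_abs _ _).trans ?_
  have : ∀ i, |∫ x, h i x ∂ν i - h i (ω i)| ≤ 2 * B := fun i =>
    (abs_sub _ _).trans (by linarith [hb i (ω i), abs_integral_le_of_forall_abs_le (ν i) (hb i)])
  simpa using Finset.sum_le_sum fun i (_ : i ∈ Finset.univ) => this i

/-- Expected supremum of the empirical process of a finite class of functions that is dominated,
in the sense of contraction, by a class of bounded linear functionals on a pair of inner product
spaces. -/
theorem integral_ciSup_sum_deviation_le {n : ℕ} (ν : Fin n → Measure Z)
    [∀ i, IsProbabilityMeasure (ν i)] {h : Fin n → Θ → Z → ℝ} {B R S r : ℝ}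
    (hm : ∀ i θ, Measurable (h i θ)) (hb : ∀ i θ z, |h i θ z| ≤ B)
    {a : Θ → H} {b : Θ → K} (ha : ∀ θ, ‖a θ‖ ≤ R) (hbS : ∀ θ, ‖b θ‖ ≤ S)
    {φ : Fin n → Z → H} {ψ : Fin n → Z → K}
    (hφ : ∀ i, ∀ᵐ z ∂ν i, ‖φ i z‖ ≤ r) (hψ : ∀ i, ∀ᵐ z ∂ν i, ‖ψ i z‖ ≤ r)
    (hlip : ∀ i θ θ' z, 2 * |h i θ z - h i θ' z| ≤
      |(inner ℝ (a θ) (φ i z) + inner ℝ (b θ) (ψ i z)) -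
        (inner ℝ (a θ') (φ i z) + inner ℝ (b θ') (ψ i z))|)
    (u : H) (w : K) :
    ∫ ω, ⨆ θ, (inner ℝ (a θ) u + inner ℝ (b θ) w +
        ∑ i, (∫ x, h i θ x ∂ν i - h i θ (ω i))) ∂Measure.pi ν ≤
      R * √(‖u‖ ^ 2 + n * r ^ 2) + S * √(‖w‖ ^ 2 + n * r ^ 2) := by
  have hR : 0 ≤ R := (norm_nonneg _).trans (ha (Classical.arbitrary Θ))
  have hS : 0 ≤ S := (norm_nonneg _).trans (hbS (Classical.arbitrary Θ))
  induction n generalizing u w with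
  | zero =>
    have : ∀ θ, inner ℝ (a θ) u + inner ℝ (b θ) w ≤ R * ‖u‖ + S * ‖w‖ := fun θ =>
      add_le_add
        ((real_inner_le_norm _ _).trans (mul_le_mul_of_nonneg_right (ha θ) (norm_nonneg _)))
        ((real_inner_le_norm _ _).trans (mul_le_mul_of_nonneg_right (hbS θ) (norm_nonneg _)))
    simpa [Real.sqrt_sq] using ciSup_le this
  | succ n ih =>
    set P := Measure.pi fun j : Fin n => ν j.succ
    set F : Θ → ℝ := fun θ => inner ℝ (a θ) u + inner ℝ (b θ) w with hF
    set D : Θ → (Fin n → Z) → ℝ := fun θ ω =>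
      ∑ i : Fin n, (∫ x, h i.succ θ x ∂ν i.succ - h i.succ θ (ω i)) with hD
    have hDm : ∀ θ, Measurable (D θ) := fun θ =>
      Finset.measurable_sum _ fun i _ => ((hm i.succ θ).comp (measurable_pi_apply i)).const_sub _
    have hDb : ∀ θ ω, |D θ ω| ≤ n * (2 * B) := fun θ ω =>
      abs_sum_deviation_le (fun i => ν i.succ) (fun i z => hb i.succ θ z) ω
    obtain ⟨C, hC⟩ : ∃ C, ∀ θ, |F θ| ≤ C :=
      ⟨_, le_ciSup (Set.finite_range fun θ => |F θ|).bddAbove⟩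
    have intProd : ∀ {k : Θ → Z → ℝ}, (∀ θ, Measurable (k θ)) → (∀ θ z, |k θ z| ≤ 2 * B) →
        Integrable (fun p : Z × (Fin n → Z) => ⨆ θ, (F θ + D θ p.2 + k θ p.1)) ((ν 0).prod P) :=
      fun {k} hk hkb => integrable_ciSup_of_bound _
        (q := fun θ (p : Z × (Fin n → Z)) => F θ + D θ p.2 + k θ p.1)
        (fun θ => (((hDm θ).comp measurable_snd).const_add _).add ((hk θ).comp measurable_fst))
        (C := C + n * (2 * B) + 2 * B) fun θ p =>
          (abs_add_three _ _ _).trans (add_le_add_three (hC θ) (hDb θ p.2) (hkb θ p.1))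
    have intSection : ∀ k : Θ → ℝ, Integrable (fun ω => ⨆ θ, (F θ + D θ ω + k θ)) P := by
      intro k
      obtain ⟨C', hC'⟩ : ∃ C', ∀ θ, |k θ| ≤ C' :=
        ⟨_, le_ciSup (Set.finite_range fun θ => |k θ|).bddAbove⟩
      exact integrable_ciSup_of_bound _ (fun θ => ((hDm θ).const_add _).add_const _)
        fun θ ω => (abs_add_three _ _ _).trans (add_le_add_three (hC θ) (hDb θ ω) (hC' θ))
    have hdev : Integrable (fun p : Z × (Fin n → Z) =>
        ⨆ θ, (F θ + D θ p.2 + (∫ x, h 0 θ x ∂ν 0 - h 0 θ p.1))) ((ν 0).prod P) :=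
      intProd (k := fun θ z => ∫ x, h 0 θ x ∂ν 0 - h 0 θ z) (fun θ => (hm 0 θ).const_sub _)
        fun θ z => (abs_sub _ _).trans
          (by linarith [hb 0 θ z, abs_integral_le_of_forall_abs_le (ν 0) (hb 0 θ)])
    have hplus : Integrable (fun p : Z × (Fin n → Z) =>
        ⨆ θ, (F θ + D θ p.2 + 2 * h 0 θ p.1)) ((ν 0).prod P) :=
      intProd (k := fun θ z => 2 * h 0 θ z) (fun θ => (hm 0 θ).const_mul 2) fun θ z => by
        rw [abs_mul, abs_two]; linarith [hb 0 θ z]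
    have hminus : Integrable (fun p : Z × (Fin n → Z) =>
        ⨆ θ, (F θ + D θ p.2 - 2 * h 0 θ p.1)) ((ν 0).prod P) :=
      intProd (k := fun θ z => -(2 * h 0 θ z)) (fun θ => ((hm 0 θ).const_mul 2).neg) fun θ z => by
        rw [abs_neg, abs_mul, abs_two]; linarith [hb 0 θ z]
    have hsym : Integrable (fun p : Z × (Fin n → Z) => ((⨆ θ, (F θ + D θ p.2 + 2 * h 0 θ p.1)) +
        ⨆ θ, (F θ + D θ p.2 - 2 * h 0 θ p.1)) / 2) ((ν 0).prod P) :=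
      (hplus.add hminus).div_const 2
    have hmeas : Measurable fun ω : Fin (n + 1) → Z => ⨆ θ, (inner ℝ (a θ) u + inner ℝ (b θ) w +
        ∑ i, (∫ x, h i θ x ∂ν i - h i θ (ω i))) :=
      Measurable.iSup fun θ => (Finset.measurable_sum _ fun i _ =>
        ((hm i θ).comp (measurable_pi_apply i)).const_sub _).const_add _
    have hsplit : ∀ p : Z × (Fin n → Z), (⨆ θ, (inner ℝ (a θ) u + inner ℝ (b θ) w +
        ∑ i, (∫ x, h i θ x ∂ν i - h i θ ((Fin.cons p.1 p.2 : Fin (n + 1) → Z) i)))) =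
        ⨆ θ, (F θ + D θ p.2 + (∫ x, h 0 θ x ∂ν 0 - h 0 θ p.1)) := fun p => by
      congr 1 with θ
      rw [Fin.sum_univ_succ]
      simp only [Fin.cons_zero, Fin.cons_succ, hF, hD]
      ring
    have hsection : ∀ᵐ z ∂ν 0, ∫ ω, ((⨆ θ, (F θ + D θ ω + 2 * h 0 θ z)) +
        ⨆ θ, (F θ + D θ ω - 2 * h 0 θ z)) / 2 ∂P ≤
        R * √(‖u‖ ^ 2 + (n + 1 : ℕ) * r ^ 2) + S * √(‖w‖ ^ 2 + (n + 1 : ℕ) * r ^ 2) := by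
      filter_upwards [hφ 0, hψ 0] with z hz hz'
      set g : Θ → ℝ := fun θ => inner ℝ (a θ) (φ 0 z) + inner ℝ (b θ) (ψ 0 z) with hg
      have ihplus : ∫ ω, ⨆ θ, (F θ + D θ ω + g θ) ∂P ≤ _ :=
        (integral_congr_ae (ae_of_all _ fun ω => by
          congr 1 with θ; simp only [hF, hD, hg, inner_add_right]; ring)).trans_le
        (ih (fun i => ν i.succ) (fun i θ => hm i.succ θ) (fun i θ z => hb i.succ θ z)
          (fun i => hφ i.succ) (fun i => hψ i.succ) (fun i => hlip i.succ)
          (u + φ 0 z) (w + ψ 0 z))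
      have ihminus : ∫ ω, ⨆ θ, (F θ + D θ ω - g θ) ∂P ≤ _ :=
        (integral_congr_ae (ae_of_all _ fun ω => by
          congr 1 with θ; simp only [hF, hD, hg, inner_sub_right]; ring)).trans_le
        (ih (fun i => ν i.succ) (fun i θ => hm i.succ θ) (fun i θ z => hb i.succ θ z)
          (fun i => hφ i.succ) (fun i => hψ i.succ) (fun i => hlip i.succ)
          (u - φ 0 z) (w - ψ 0 z))
      have intMinus : ∀ k : Θ → ℝ, Integrable (fun ω => ⨆ θ, (F θ + D θ ω - k θ)) P :=
        fun k => intSection fun θ => -k θ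
      have hcontr : ∫ ω, ((⨆ θ, (F θ + D θ ω + 2 * h 0 θ z)) +
          ⨆ θ, (F θ + D θ ω - 2 * h 0 θ z)) / 2 ∂P ≤
          (∫ ω, ⨆ θ, (F θ + D θ ω + g θ) ∂P + ∫ ω, ⨆ θ, (F θ + D θ ω - g θ) ∂P) / 2 := by
        rw [← integral_add (intSection g) (intMinus g), ← integral_div]
        refine integral_mono (((intSection _).add (intMinus _)).div_const 2)
          (((intSection g).add (intMinus g)).div_const 2) fun ω => ?_
        refine div_le_div_of_nonneg_right
          (ciSup_add_add_ciSup_sub_le (fun θ => F θ + D θ ω) fun θ θ' => ?_) zero_le_two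
        rw [← mul_sub, abs_mul, abs_two]
        exact hlip 0 θ θ' z
      have hu := mul_le_mul_of_nonneg_left
        (sqrt_add_sqrt_norm_sq_le u (k := n * r ^ 2) (by positivity) hz) hR
      have hw := mul_le_mul_of_nonneg_left
        (sqrt_add_sqrt_norm_sq_le w (k := n * r ^ 2) (by positivity) hz') hS
      rw [Nat.cast_succ, add_one_mul]
      linarith
    rw [integral_pi_fin_succ ν hmeas]
    simp_rw [hsplit]
    calc ∫ p, (⨆ θ, (F θ + D θ p.2 + (∫ x, h 0 θ x ∂ν 0 - h 0 θ p.1))) ∂(ν 0).prod P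
        = ∫ ω, ∫ z, (⨆ θ, (F θ + D θ ω + (∫ x, h 0 θ x ∂ν 0 - h 0 θ z))) ∂ν 0 ∂P :=
          integral_prod_symm _ hdev
      _ ≤ ∫ ω, ∫ z, ((⨆ θ, (F θ + D θ ω + 2 * h 0 θ z)) +
            ⨆ θ, (F θ + D θ ω - 2 * h 0 θ z)) / 2 ∂ν 0 ∂P :=
          integral_mono hdev.integral_prod_right hsym.integral_prod_right fun ω =>
            integral_ciSup_deviation_le (ν 0) (fun θ => F θ + D θ ω) (hm 0) (hb 0)
      _ = ∫ z, ∫ ω, ((⨆ θ, (F θ + D θ ω + 2 * h 0 θ z)) +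
            ⨆ θ, (F θ + D θ ω - 2 * h 0 θ z)) / 2 ∂P ∂ν 0 := by
          rw [← integral_prod_symm _ hsym, integral_prod _ hsym]
      _ ≤ ∫ _, (R * √(‖u‖ ^ 2 + (n + 1 : ℕ) * r ^ 2) +
            S * √(‖w‖ ^ 2 + (n + 1 : ℕ) * r ^ 2)) ∂ν 0 :=
          integral_mono_ae hsym.integral_prod_left (integrable_const _) hsection
      _ = _ := by simp

/-- High-probability bound for the supremum of the empirical process of a finite class. -/
theorem measure_exists_sum_deviation_gt_le {n : ℕ} (ν : Fin n → Measure Z)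
    [∀ i, IsProbabilityMeasure (ν i)] {h : Fin n → Θ → Z → ℝ} {B R S r : ℝ}
    (hm : ∀ i θ, Measurable (h i θ)) (hb : ∀ i θ z, h i θ z ∈ Set.Icc 0 B)
    {a : Θ → H} {b : Θ → K} (ha : ∀ θ, ‖a θ‖ ≤ R) (hbS : ∀ θ, ‖b θ‖ ≤ S)
    {φ : Fin n → Z → H} {ψ : Fin n → Z → K} (hr : 0 ≤ r)
    (hφ : ∀ i, ∀ᵐ z ∂ν i, ‖φ i z‖ ≤ r) (hψ : ∀ i, ∀ᵐ z ∂ν i, ‖ψ i z‖ ≤ r)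
    (hlip : ∀ i θ θ' z, 2 * |h i θ z - h i θ' z| ≤
      |(inner ℝ (a θ) (φ i z) + inner ℝ (b θ) (ψ i z)) -
        (inner ℝ (a θ') (φ i z) + inner ℝ (b θ') (ψ i z))|)
    {ε : ℝ} (hε : 0 ≤ ε) :
    Measure.pi ν {ω | ∃ θ, (R + S) * (√n * r) + ε < ∑ i, (∫ x, h i θ x ∂ν i - h i θ (ω i))} ≤
      ENNReal.ofReal (Real.exp (-2 * ε ^ 2 / (n * B ^ 2))) := by
  have hb' : ∀ i θ z, |h i θ z| ≤ B := fun i θ z => by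
    rw [abs_of_nonneg (hb i θ z).1]; exact (hb i θ z).2
  set f : (Fin n → Z) → ℝ := fun ω => ⨆ θ, ∑ i, (∫ x, h i θ x ∂ν i - h i θ (ω i))
  have hfm : Measurable f := Measurable.iSup fun θ => Finset.measurable_sum _ fun i _ =>
    ((hm i θ).comp (measurable_pi_apply i)).const_sub _
  have hfb : ∀ ω, |f ω| ≤ n * (2 * B) := fun ω => abs_ciSup_le_of_forall_abs_le fun θ =>
    abs_sum_deviation_le ν (fun i z => hb' i θ z) ω
  have hdiff : ∀ ω i z, |f (Function.update ω i z) - f ω| ≤ B := fun ω i z =>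
    abs_ciSup_sub_ciSup_le fun θ => by
      rw [← Finset.sum_sub_distrib, Finset.sum_eq_single i]
      · rw [Function.update_self, abs_le]
        have h1 := hb i θ z
        have h2 := hb i θ (ω i)
        constructor <;> linarith [h1.1, h1.2, h2.1, h2.2]
      · intro j _ hj
        rw [Function.update_of_ne hj, sub_self]
      · simp
  have hmean : ∫ ω, f ω ∂Measure.pi ν ≤ (R + S) * (√n * r) := by
    have := integral_ciSup_sum_deviation_le ν hm hb' ha hbS hφ hψ hlip 0 0
    simp only [inner_zero_right, add_zero, zero_add, norm_zero] at this
    refine this.trans_eq ?_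
    rw [zero_pow two_ne_zero, zero_add, Real.sqrt_mul (Nat.cast_nonneg n), Real.sqrt_sq hr]
    ring
  have htail := measure_ge_le_of_bounded_differences ν hfm hfb (C := fun _ => B) hdiff hε
  simp only [Finset.sum_const, Finset.card_univ, Fintype.card_fin, nsmul_eq_mul] at htail
  refine (measure_mono ?_).trans
    ((ENNReal.le_ofReal_iff_toReal_le (measure_ne_top _ _) (Real.exp_nonneg _)).2 htail)
  rintro ω ⟨θ, hθ⟩
  have hle := le_ciSup (Set.finite_range fun θ => ∑ i, (∫ x, h i θ x ∂ν i - h i θ (ω i))).bddAbove θ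
  change _ ≤ f ω
  linarith! [hle]

end EmpiricalProcess

section SeparableClass

variable {Θ Z H K : Type*} [TopologicalSpace Θ] [TopologicalSpace.SeparableSpace Θ]
  [FirstCountableTopology Θ] [Nonempty Θ] [MeasurableSpace Z]
  [NormedAddCommGroup H] [InnerProductSpace ℝ H] [NormedAddCommGroup K] [InnerProductSpace ℝ K]

/-- High-probability bound for the supremum of the empirical process of a separable class. -/
theorem measure_exists_sum_deviation_gt_le_of_continuous {n : ℕ} (ν : Fin n → Measure Z)
    [∀ i, IsProbabilityMeasure (ν i)] {h : Fin n → Θ → Z → ℝ} {B R S r : ℝ}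
    (hm : ∀ i θ, Measurable (h i θ)) (hcont : ∀ i z, Continuous fun θ => h i θ z)
    (hb : ∀ i θ z, h i θ z ∈ Set.Icc 0 B)
    {a : Θ → H} {b : Θ → K} (ha : ∀ θ, ‖a θ‖ ≤ R) (hbS : ∀ θ, ‖b θ‖ ≤ S)
    {φ : Fin n → Z → H} {ψ : Fin n → Z → K} (hr : 0 ≤ r)
    (hφ : ∀ i, ∀ᵐ z ∂ν i, ‖φ i z‖ ≤ r) (hψ : ∀ i, ∀ᵐ z ∂ν i, ‖ψ i z‖ ≤ r)
    (hlip : ∀ i θ θ' z, 2 * |h i θ z - h i θ' z| ≤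
      |(inner ℝ (a θ) (φ i z) + inner ℝ (b θ) (ψ i z)) -
        (inner ℝ (a θ') (φ i z) + inner ℝ (b θ') (ψ i z))|)
    {ε : ℝ} (hε : 0 ≤ ε) :
    Measure.pi ν {ω | ∃ θ, (R + S) * (√n * r) + ε < ∑ i, (∫ x, h i θ x ∂ν i - h i θ (ω i))} ≤
      ENNReal.ofReal (Real.exp (-2 * ε ^ 2 / (n * B ^ 2))) := by
  set q := TopologicalSpace.denseSeq Θ
  set bad : ℕ → Set (Fin n → Z) := fun N => {ω | ∃ k : Fin (N + 1),
    (R + S) * (√n * r) + ε < ∑ i, (∫ x, h i (q k) x ∂ν i - h i (q k) (ω i))}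
  have hmono : Monotone bad := by
    rintro M N hMN ω ⟨k, hk⟩
    exact ⟨Fin.castLE (Nat.succ_le_succ hMN) k, hk⟩
  have hsub : {ω | ∃ θ, (R + S) * (√n * r) + ε <
      ∑ i, (∫ x, h i θ x ∂ν i - h i θ (ω i))} ⊆ ⋃ N, bad N := by
    rintro ω ⟨θ, hθ⟩
    have hc : Continuous fun θ => ∑ i, (∫ x, h i θ x ∂ν i - h i θ (ω i)) := by
      refine continuous_finsetSum _ fun i _ => Continuous.sub ?_ (hcont i (ω i))
      refine continuous_of_dominated (bound := fun _ => B)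
        (fun θ => (hm i θ).aestronglyMeasurable) (fun θ => ae_of_all _ fun z => ?_)
        (integrable_const _) (ae_of_all _ (hcont i))
      rw [Real.norm_eq_abs, abs_of_nonneg (hb i θ z).1]
      exact (hb i θ z).2
    obtain ⟨k, hk⟩ := (TopologicalSpace.denseRange_denseSeq Θ).exists_mem_open
      (isOpen_lt continuous_const hc) ⟨θ, hθ⟩
    exact Set.mem_iUnion.2 ⟨k, Fin.last k, hk⟩
  refine (measure_mono hsub).trans ?_
  rw [hmono.measure_iUnion]
  exact iSup_le fun N => measure_exists_sum_deviation_gt_le ν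
    (h := fun i (k : Fin (N + 1)) => h i (q k)) (fun i k => hm i (q k)) (fun i k => hb i (q k))
    (a := fun k => a (q k)) (b := fun k => b (q k)) (fun k => ha (q k)) (fun k => hbS (q k))
    hr hφ hψ (fun i k k' => hlip i (q k) (q k')) hε

end SeparableClass

/-- Families of `T` vectors in `ℝ^d`, with the Frobenius norm. -/
abbrev TaskWeights (d T : ℕ) : Type := PiLp 2 fun _ : Fin T => EuclideanSpace ℝ (Fin d)

section LinearAlgebra

variable {d T : ℕ}

theorem sum_sum_sq_le_l21_sq (A : Matrix (Fin d) (Fin T) ℝ) :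
    ∑ t, ∑ j, A j t ^ 2 ≤ l21 A ^ 2 := by
  rw [Finset.sum_comm, l21]
  refine le_trans (le_of_eq ?_)
    (Finset.sum_sq_le_sq_sum_of_nonneg fun i _ => Real.sqrt_nonneg (∑ t, A i t ^ 2))
  exact Finset.sum_congr rfl fun j _ =>
    (Real.sq_sqrt (Finset.sum_nonneg fun t _ => sq_nonneg (A j t))).symm

theorem norm_toLp_mulVec_sq_of_transpose_mul_self {U : Matrix (Fin d) (Fin d) ℝ}
    (hU : Uᵀ * U = 1) (x : Fin d → ℝ) : ‖WithLp.toLp 2 (U *ᵥ x)‖ ^ 2 = ∑ j, x j ^ 2 := by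
  have : (U *ᵥ x) ⬝ᵥ (U *ᵥ x) = x ⬝ᵥ x := by
    rw [dotProduct_mulVec, ← mulVec_transpose, mulVec_mulVec, hU, one_mulVec]
  rw [EuclideanSpace.norm_sq_eq]
  simpa [dotProduct, sq] using this

theorem inner_single_right_eq_inner_apply (V : TaskWeights d T) (t : Fin T)
    (x : EuclideanSpace ℝ (Fin d)) :
    inner ℝ V (PiLp.single 2 t x) = inner ℝ (V t) x := by
  rw [PiLp.inner_apply, Finset.sum_eq_single t]
  · simp
  · intro s _ hs
    simp [hs]
  · simp

theorem norm_toLp_mulVec_columns_le {U : Matrix (Fin d) (Fin d) ℝ} (hU : Uᵀ * U = 1)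
    {A : Matrix (Fin d) (Fin T) ℝ} {κ : ℝ} (hA : l21 A ^ 2 ≤ κ) :
    ‖(WithLp.toLp 2 fun t => WithLp.toLp 2 (U *ᵥ fun j => A j t) : TaskWeights d T)‖ ≤ √κ := by
  refine Real.le_sqrt_of_sq_le ?_
  rw [PiLp.norm_sq_eq_of_L2]
  simp only [norm_toLp_mulVec_sq_of_transpose_mul_self hU]
  exact (sum_sum_sq_le_l21_sq A).trans hA

theorem inner_toLp_mulVec_add (U : Matrix (Fin d) (Fin d) ℝ) (a a0 x : Fin d → ℝ) :
    inner ℝ (WithLp.toLp 2 (U *ᵥ a) + WithLp.toLp 2 (U *ᵥ a0)) (WithLp.toLp 2 x) =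
      (fun j => a j + a0 j) ⬝ᵥ Uᵀ *ᵥ x := by
  rw [← WithLp.toLp_add, EuclideanSpace.inner_toLp_toLp, ← mulVec_add, dotProduct_mulVec,
    vecMul_transpose, dotProduct_comm]
  rfl

end LinearAlgebra

/-- multi-task generalization bound. Under the constraints
‖A‖₂₁² ≤ T/γ, ‖a₀‖₂² ≤ 1/β with U orthogonal, a c-admissible loss bounded by B,
m samples per task, and sample feature vectors of norm at most r, with probability at
least 1 − δ the average generalization gap is at most
2cr/√(γm) + 2cr/√(βmT) + 3B√(ln(2/δ)/(2mT)), uniformly over (A, a₀, U). -/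
theorem multitask_generalization_bound {d T m : ℕ} [NeZero T] [NeZero m]
    (μ : Fin T → Measure ((Fin d → ℝ) × ℝ)) [∀ t, IsProbabilityMeasure (μ t)]
    (l : ℝ → ℝ → ℝ) (B c r γ β δ : ℝ)
    (hγ : 0 < γ) (hβ : 0 < β) (hδ : 0 < δ) (hc : 0 ≤ c) (hr : 0 ≤ r)
    (hl_meas : Measurable fun p : ℝ × ℝ => l p.1 p.2)
    (hl_bdd : ∀ y s : ℝ, l y s ∈ Set.Icc 0 B)
    (hadm : ∀ y s s' : ℝ, |l y s - l y s'| ≤ c * |s - s'|)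
    (hx : ∀ t, ∀ᵐ p ∂μ t, Real.sqrt (∑ j, p.1 j ^ 2) ≤ r) :
    1 - ENNReal.ofReal δ ≤
      (Measure.pi fun t : Fin T => Measure.pi fun _ : Fin m => μ t)
        {ω | ∀ (A : Matrix (Fin d) (Fin T) ℝ) (a0 : Fin d → ℝ)
            (U : Matrix (Fin d) (Fin d) ℝ),
          l21 A ^ 2 ≤ (T : ℝ) / γ → (∑ j, a0 j ^ 2) ≤ 1 / β → Uᵀ * U = 1 →
          (1 / (T : ℝ)) * (∑ t, ∫ p, l p.2 ((fun j => A j t + a0 j) ⬝ᵥ Uᵀ.mulVec p.1) ∂μ t) -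
              (1 / (T : ℝ)) * ∑ t, (1 / (m : ℝ)) *
                ∑ i, l (ω t i).2 ((fun j => A j t + a0 j) ⬝ᵥ Uᵀ.mulVec (ω t i).1) ≤
            2 * c * r / Real.sqrt (γ * m) + 2 * c * r / Real.sqrt (β * m * T) +
              3 * B * Real.sqrt (Real.log (2 / δ) / (2 * m * T))} := by
  have hT : (0 : ℝ) < T := Nat.cast_pos.2 (NeZero.pos T)
  have hmpos : (0 : ℝ) < m := Nat.cast_pos.2 (NeZero.pos m)
  have hB : 0 ≤ B := (hl_bdd 0 0).1.trans (hl_bdd 0 0).2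
  rcases le_or_gt 1 δ with hδ1 | hδ1
  · rw [tsub_eq_zero_of_le (ENNReal.one_le_ofReal.2 hδ1)]
    exact zero_le
  rcases hB.eq_or_lt with rfl | hBpos
  · have hl0 : ∀ y s, l y s = 0 := fun y s => le_antisymm (hl_bdd y s).2 (hl_bdd y s).1
    refine tsub_le_self.trans (le_of_eq ?_)
    rw [← measure_univ (μ := Measure.pi fun t : Fin T => Measure.pi fun _ : Fin m => μ t)]
    congr 1
    symm
    refine Set.eq_univ_of_forall fun ω A a0 U _ _ _ => ?_
    simp only [hl0, integral_zero, Finset.sum_const_zero, mul_zero, sub_zero]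
    positivity
  have : Nonempty {p : TaskWeights d T × EuclideanSpace ℝ (Fin d) //
      ‖p.1‖ ≤ √(T / γ) ∧ ‖p.2‖ ≤ √(1 / β)} :=
    ⟨⟨0, norm_zero.trans_le (Real.sqrt_nonneg _), norm_zero.trans_le (Real.sqrt_nonneg _)⟩⟩
  set task : Fin (T * m) → Fin T := fun k => (finProdFinEquiv.symm k).1
  set x : (Fin d → ℝ) × ℝ → EuclideanSpace ℝ (Fin d) := fun z => WithLp.toLp 2 z.1
  have hxm : Measurable x := by fun_prop
  have hxr : ∀ t, ∀ᵐ z ∂μ t, ‖x z‖ ≤ r := fun t => by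
    filter_upwards [hx t] with z hz
    rw [EuclideanSpace.norm_eq]
    simpa [x] using hz
  set h : Fin (T * m) → {p : TaskWeights d T × EuclideanSpace ℝ (Fin d) //
      ‖p.1‖ ≤ √(T / γ) ∧ ‖p.2‖ ≤ √(1 / β)} →
      (Fin d → ℝ) × ℝ → ℝ := fun k θ z =>
    l z.2 (inner ℝ (θ.1.1 (task k) + θ.1.2) (x z))
  set ε := T * m * (3 * B * √(Real.log (2 / δ) / (2 * m * T)))
  have hlip : ∀ k θ θ' z, 2 * |h k θ z - h k θ' z| ≤
      |(inner ℝ ((2 * c) • θ.1.1) (PiLp.single 2 (task k) (x z)) +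
          inner ℝ ((2 * c) • θ.1.2) (x z)) -
        (inner ℝ ((2 * c) • θ'.1.1) (PiLp.single 2 (task k) (x z)) +
          inner ℝ ((2 * c) • θ'.1.2) (x z))| := by
    intro k θ θ' z
    simp only [real_inner_smul_left, inner_single_right_eq_inner_apply]
    have : 2 * c * inner ℝ (θ.1.1 (task k)) (x z) + 2 * c * inner ℝ θ.1.2 (x z) -
        (2 * c * inner ℝ (θ'.1.1 (task k)) (x z) + 2 * c * inner ℝ θ'.1.2 (x z)) =
        2 * c * (inner ℝ (θ.1.1 (task k) + θ.1.2) (x z) -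
          inner ℝ (θ'.1.1 (task k) + θ'.1.2) (x z)) := by
      simp only [inner_add_left]
      ring
    rw [this, abs_mul, abs_of_nonneg (by positivity : 0 ≤ 2 * c), mul_assoc]
    exact mul_le_mul_of_nonneg_left (hadm _ _ _) zero_le_two
  have hlcont : ∀ y, Continuous (l y) := fun y =>
    (LipschitzWith.of_dist_le_mul (K := ⟨c, hc⟩) fun s s' => hadm y s s').continuous
  have hscale : ∀ {V : Type} [NormedAddCommGroup V] [NormedSpace ℝ V] {v : V} {ρ : ℝ},
      ‖v‖ ≤ ρ → ‖(2 * c) • v‖ ≤ 2 * c * ρ := fun hv => by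
    rw [norm_smul, Real.norm_of_nonneg (by positivity : 0 ≤ 2 * c)]
    exact mul_le_mul_of_nonneg_left hv (by positivity)
  have tail := measure_exists_sum_deviation_gt_le_of_continuous
    (fun k : Fin (T * m) => μ (task k)) (h := h) (B := B) (r := r)
    (a := fun θ => (2 * c) • θ.1.1) (b := fun θ => (2 * c) • θ.1.2)
    (φ := fun k z => PiLp.single 2 (task k) (x z)) (ψ := fun _ z => x z)
    (fun k θ => hl_meas.comp (measurable_snd.prodMk (by fun_prop)))
    (fun k z => (hlcont z.2).comp (by fun_prop))
    (fun k θ z => hl_bdd _ _)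
    (fun θ => hscale θ.2.1) (fun θ => hscale θ.2.2) hr
    (fun k => by simpa only [PiLp.norm_single] using hxr (task k)) (fun k => hxr (task k))
    hlip (ε := ε) (by positivity)
  have hexp : Real.exp (-2 * ε ^ 2 / ((T * m : ℕ) * B ^ 2)) ≤ δ := by
    have hlog : Real.log (1 / δ) ≤ Real.log (2 / δ) :=
      Real.log_le_log (by positivity) (by gcongr; norm_num)
    have hlog0 : 0 < Real.log (1 / δ) := Real.log_pos (by rw [lt_div_iff₀ hδ]; linarith)
    have hval : -2 * ε ^ 2 / ((T * m : ℕ) * B ^ 2) = -(9 * Real.log (2 / δ)) := by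
      simp only [ε, mul_pow]
      rw [Real.sq_sqrt (div_nonneg (by linarith) (by positivity))]
      push_cast
      field_simp
      ring
    rw [hval, ← Real.le_log_iff_exp_le hδ]
    rw [one_div, Real.log_inv] at hlog hlog0
    linarith
  have hscaled : T * m * (2 * c * r / √(γ * m) + 2 * c * r / √(β * m * T) +
      3 * B * √(Real.log (2 / δ) / (2 * m * T))) =
      (2 * c * √(T / γ) + 2 * c * √(1 / β)) * (√(T * m : ℕ) * r) + ε := by
    push_cast
    rw [Real.sqrt_mul hγ.le, Real.sqrt_mul (by positivity), Real.sqrt_mul hβ.le,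
      Real.sqrt_div hT.le, Real.sqrt_div zero_le_one, Real.sqrt_mul hT.le, Real.sqrt_one]
    have hT2 := Real.sq_sqrt hT.le
    have hm2 := Real.sq_sqrt hmpos.le
    simp only [ε]
    rw [mul_add, add_left_inj]
    generalize √(T : ℝ) = τ at *
    generalize √(m : ℝ) = κ at *
    have hτ : τ ≠ 0 := by rintro rfl; simp at hT2; exact hT.ne hT2
    have hκ : κ ≠ 0 := by rintro rfl; simp at hm2; exact hmpos.ne hm2
    have := Real.sqrt_pos.2 hγ
    have := Real.sqrt_pos.2 hβ
    rw [← hT2, ← hm2]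
    field_simp
  have hρ := measurePreserving_uncurry_finProdFinEquiv (m := m) μ
  set good : Set (Fin T → Fin m → (Fin d → ℝ) × ℝ) := Set.ofPred fun ω => _
  set P := Measure.pi fun t : Fin T => Measure.pi fun _ : Fin m => μ t
  have hbad : P goodᶜ ≤ ENNReal.ofReal δ := by
    refine le_trans ?_ ((tail.trans (ENNReal.ofReal_le_ofReal hexp)))
    rw [← hρ.map_eq]
    refine le_trans (measure_mono ?_) (Measure.le_map_apply hρ.measurable.aemeasurable _)
    intro ω hω
    simp only [good, Set.mem_compl_iff, Set.mem_ofPred_eq, not_forall, not_le] at hω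
    obtain ⟨A, a0, U, hA, ha0, hU, hgap⟩ := hω
    refine ⟨⟨(WithLp.toLp 2 fun t => WithLp.toLp 2 (U *ᵥ fun j => A j t),
      WithLp.toLp 2 (U *ᵥ a0)), norm_toLp_mulVec_columns_le hU hA, Real.le_sqrt_of_sq_le
      ((norm_toLp_mulVec_sq_of_transpose_mul_self hU a0).trans_le ha0)⟩, ?_⟩
    rw [← hscaled]
    simp only [h, x, inner_toLp_mulVec_add]
    rw [← finProdFinEquiv.sum_comp, Fintype.sum_prod_type]
    simp only [task, Equiv.symm_apply_apply, Finset.sum_sub_distrib, Finset.sum_const,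
      Finset.card_univ, Fintype.card_fin, nsmul_eq_mul, ← Finset.mul_sum]
    refine (mul_lt_mul_of_pos_left hgap (mul_pos hT hmpos)).trans_eq ?_
    rw [← Finset.mul_sum]
    field_simp
  rw [tsub_le_iff_right]
  calc (1 : ENNReal) = P Set.univ := measure_univ.symm
    _ = P (good ∪ goodᶜ) := by rw [Set.union_compl_self]
    _ ≤ P good + P goodᶜ := measure_union_le _ _
    _ ≤ P good + ENNReal.ofReal δ := by gcongr
end
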